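/- Let n be odd and 0 < c < n, and let X be a uniformly random c-element subset of {1,…,n}. Then for each i ∈ {0,1}, the probability that Σ_{x∈X} x ≡ i (mod 2) is at most (1/2)·(1 + 1/n); equivalently, the number of c-element subsets of {1,…,n} whose element sum is congruent to i mod 2 is at most (1/2)·(1 + 1/n)·C(n,c). -/

import Mathlib

/-!
Let `E n c` be the sum of `(-1) ^ (∑ x ∈ X, x)` over the `c`-subsets `X` of `{1,…,n}`, i.e. the
number of such `X` with even sum minus the number with odd sum. Each parity class has size
`(C(n,c) ± E n c) / 2`, so the claim is `n * |E n c| ≤ C(n,c)`.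

As `E n c` is the coefficient of `z ^ c` in `∏ x ∈ {1,…,n}, (1 + (-1) ^ x * z)`, which for
`n = 2m + 1` equals `(1 - z) * (1 - z ^ 2) ^ m`, one has `|E (2m+1) c| = C(m, ⌊c/2⌋)`
(`signedCount_even`, with the coefficients extracted by Pascal-type recursions). It remains to see
`(2m+1) * C(m,k) ≤ C(2m+1,2k)` for `1 ≤ k ≤ m` (`mul_choose_le_choose_even`); the case of odd `c`
follows by the symmetry `c ↦ n - c`. Absorbing factors via `(n+1) * C(n,k) = (k+1) * C(n+1,k+1)`
reduces this to `(2k+1) * C(m,k) ≤ C(2m+1,2k)`, an induction on `m` by Pascal's rule.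
-/

/-- The number of `c`-subsets of `{1,…,n}` with even sum minus the number with odd sum. -/
def signedCount (n c : ℕ) : ℤ :=
  ∑ X ∈ (Finset.Icc 1 n).powersetCard c, (-1) ^ (∑ x ∈ X, x)

lemma signedCount_zero_right (n : ℕ) : signedCount n 0 = 1 := by
  simp [signedCount]

lemma signedCount_zero_succ (c : ℕ) : signedCount 0 (c + 1) = 0 := by
  rw [signedCount, Finset.powersetCard_eq_empty.mpr (by simp), Finset.sum_empty]

/-- Split the subsets according to whether they contain `n + 1`. -/
lemma signedCount_succ_succ (n c : ℕ) :
    signedCount (n + 1) (c + 1) = signedCount n (c + 1) + (-1) ^ (n + 1) * signedCount n c := by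
  have hnot : n + 1 ∉ Finset.Icc 1 n := by simp
  have hins : Finset.Icc 1 (n + 1) = insert (n + 1) (Finset.Icc 1 n) := by
    ext x; simp only [Finset.mem_Icc, Finset.mem_insert]; omega
  have hmem : ∀ X ∈ (Finset.Icc 1 n).powersetCard c, n + 1 ∉ X := fun X hX h =>
    hnot ((Finset.mem_powersetCard.mp hX).1 h)
  unfold signedCount
  rw [hins, Finset.powersetCard_succ_insert hnot, Finset.sum_union, Finset.sum_image,
    Finset.mul_sum]
  · congr 1
    refine Finset.sum_congr rfl fun X hX => ?_
    rw [Finset.sum_insert (hmem X hX), pow_add]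
  · intro X hX Y hY hXY
    rw [← Finset.erase_insert (hmem X hX), ← Finset.erase_insert (hmem Y hY)]
    exact congrArg (fun S => Finset.erase S (n + 1)) hXY
  · rw [Finset.disjoint_left]
    intro X hX hX'
    obtain ⟨Y, -, rfl⟩ := Finset.mem_image.mp hX'
    exact hnot ((Finset.mem_powersetCard.mp hX).1 (Finset.mem_insert_self _ _))

lemma signedCount_odd_succ (m c : ℕ) :
    signedCount (2 * m + 1) (c + 1) = signedCount (2 * m) (c + 1) - signedCount (2 * m) c := by
  rw [signedCount_succ_succ, Odd.neg_one_pow ⟨m, rfl⟩]; ring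

lemma signedCount_even_succ (m c : ℕ) :
    signedCount (2 * (m + 1)) (c + 1)
      = signedCount (2 * m + 1) (c + 1) + signedCount (2 * m + 1) c := by
  rw [show 2 * (m + 1) = 2 * m + 1 + 1 by ring, signedCount_succ_succ,
    Even.neg_one_pow ⟨m + 1, by ring⟩]; ring

/-- The coefficients of `(1 - z ^ 2) ^ m`. -/
lemma signedCount_even (m : ℕ) : ∀ k : ℕ,
    signedCount (2 * m) (2 * k) = (-1) ^ k * (m.choose k : ℤ) ∧
      signedCount (2 * m) (2 * k + 1) = 0 := by
  induction m with
  | zero =>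
    intro k
    refine ⟨?_, signedCount_zero_succ _⟩
    cases k with
    | zero => simp [signedCount_zero_right]
    | succ k =>
      rw [Nat.choose_zero_succ]
      simpa [Nat.mul_add] using signedCount_zero_succ (2 * k + 1)
  | succ m ih =>
    -- multiplication by `(1 - z) * (1 + z) = 1 - z ^ 2`
    have step : ∀ c, signedCount (2 * (m + 1)) (c + 2)
        = signedCount (2 * m) (c + 2) - signedCount (2 * m) c := fun c => by
      rw [signedCount_even_succ, signedCount_odd_succ, signedCount_odd_succ]; ring
    intro k
    cases k with
    | zero =>
      refine ⟨by simp [signedCount_zero_right], ?_⟩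
      have h1 := (ih 0).2
      simp only [Nat.mul_zero, Nat.zero_add] at h1 ⊢
      have h2 := signedCount_even_succ m 0
      have h3 := signedCount_odd_succ m 0
      simp only [Nat.zero_add, signedCount_zero_right] at h2 h3
      rw [h2, h3, h1]; ring
    | succ k =>
      constructor
      · have h := step (2 * k)
        rw [show 2 * k + 2 = 2 * (k + 1) by ring, (ih k).1, (ih (k + 1)).1] at h
        rw [h, Nat.choose_succ_succ]; push_cast; ring
      · have h := step (2 * k + 1)
        rw [show 2 * k + 1 + 2 = 2 * (k + 1) + 1 by ring, (ih k).2, (ih (k + 1)).2] at h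
        rw [h]; ring

lemma choose_two_step (n k : ℕ) :
    (n + 2).choose (k + 2) = n.choose (k + 2) + 2 * n.choose (k + 1) + n.choose k := by
  have h1 := Nat.choose_succ_succ (n + 1) (k + 1)
  have h2 := Nat.choose_succ_succ n (k + 1)
  have h3 := Nat.choose_succ_succ n k
  simp only [Nat.succ_eq_add_one, add_assoc, Nat.reduceAdd] at h1 h2 h3
  omega

lemma choose_le_choose_odd (m : ℕ) : ∀ k, m.choose k ≤ (2 * m + 1).choose (2 * k + 1) := by
  induction m with
  | zero => intro k; cases k <;> simp
  | succ m ih =>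
    intro k
    cases k with
    | zero => simp
    | succ k =>
      have h := choose_two_step (2 * m + 1) (2 * k + 1)
      have h1 := ih k
      have h2 := ih (k + 1)
      have h3 := Nat.choose_succ_succ m k
      simp only [Nat.succ_eq_add_one, Nat.mul_add, Nat.mul_one] at *
      grind

lemma odd_mul_choose_le (m : ℕ) :
    ∀ k, (2 * k + 1) * m.choose k ≤ (2 * m + 1).choose (2 * k) := by
  induction m with
  | zero => intro k; cases k <;> simp
  | succ m ih =>
    intro k
    cases k with
    | zero => simp
    | succ k =>
      have h := choose_two_step (2 * m + 1) (2 * k)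
      have h1 := ih k
      have h2 := ih (k + 1)
      have h3 := choose_le_choose_odd m k
      rw [show 2 * (m + 1) + 1 = 2 * m + 1 + 2 by ring, show 2 * (k + 1) = 2 * k + 2 by ring, h,
        Nat.choose_succ_succ]
      rw [show 2 * (k + 1) = 2 * k + 2 by ring] at h2
      simp only [Nat.succ_eq_add_one] at *
      nlinarith

lemma mul_choose_le_choose_even (m k : ℕ) (hk : 0 < k) (hkm : k ≤ m) :
    (2 * m + 1) * m.choose k ≤ (2 * m + 1).choose (2 * k) := by
  obtain ⟨K, rfl⟩ : ∃ K, k = K + 1 := ⟨k - 1, by omega⟩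
  obtain ⟨M, rfl⟩ : ∃ M, m = M + 1 := ⟨m - 1, by omega⟩
  have h1 := Nat.add_one_mul_choose_eq (2 * M + 2) (2 * K + 1)
  have h2 := Nat.add_one_mul_choose_eq (2 * M + 1) (2 * K)
  have h3 := Nat.add_one_mul_choose_eq M K
  have h4 := odd_mul_choose_le M K
  rw [show 2 * (M + 1) + 1 = 2 * M + 2 + 1 by ring, show 2 * (K + 1) = 2 * K + 1 + 1 by ring]
  have h5 : (2 * K + 2) * (M + 1).choose (K + 1) ≤ (2 * M + 2).choose (2 * K + 1) := by
    refine Nat.le_of_mul_le_mul_right (c := 2 * K + 1) ?_ (by omega)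
    calc (2 * K + 2) * (M + 1).choose (K + 1) * (2 * K + 1)
        = 2 * ((M + 1).choose (K + 1) * (K + 1)) * (2 * K + 1) := by ring
      _ = (2 * M + 2) * ((2 * K + 1) * M.choose K) := by rw [← h3]; ring
      _ ≤ (2 * M + 2) * (2 * M + 1).choose (2 * K) := Nat.mul_le_mul_left _ h4
      _ = (2 * M + 2).choose (2 * K + 1) * (2 * K + 1) := h2
  refine Nat.le_of_mul_le_mul_right (c := 2 * K + 1 + 1) ?_ (by omega)
  rw [← h1]
  calc _ = (2 * M + 2 + 1) * ((2 * K + 2) * (M + 1).choose (K + 1)) := by ring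
    _ ≤ _ := Nat.mul_le_mul_left _ h5

lemma mul_abs_signedCount_le (n c : ℕ) (hn : Odd n) (h0 : 0 < c) (hcn : c < n) :
    (n : ℤ) * |signedCount n c| ≤ (n.choose c : ℤ) := by
  obtain ⟨m, rfl⟩ := hn
  obtain ⟨k, rfl | rfl⟩ := Nat.even_or_odd' c
  · obtain ⟨K, rfl⟩ : ∃ K, k = K + 1 := ⟨k - 1, by omega⟩
    have h := mul_choose_le_choose_even m (K + 1) (by omega) (by omega)
    have e := signedCount_odd_succ m (2 * K + 1)
    rw [(signedCount_even m K).2, show 2 * K + 1 + 1 = 2 * (K + 1) by ring,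
      (signedCount_even m (K + 1)).1] at e
    rw [e, sub_zero, abs_mul, abs_pow, abs_neg, abs_one, one_pow, one_mul, Nat.abs_cast]
    exact_mod_cast h
  · have h := mul_choose_le_choose_even m (m - k) (by omega) (by omega)
    rw [Nat.choose_symm (by omega), show 2 * (m - k) = 2 * m + 1 - (2 * k + 1) by omega,
      Nat.choose_symm (by omega)] at h
    rw [signedCount_odd_succ, (signedCount_even m k).1, (signedCount_even m k).2, zero_sub,
      abs_neg, abs_mul, abs_pow, abs_neg, abs_one, one_pow, one_mul, Nat.abs_cast]
    exact_mod_cast h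

lemma two_mul_card_parity (n c i : ℕ) (hi : i = 0 ∨ i = 1) :
    2 * ((((Finset.Icc 1 n).powersetCard c).filter
        (fun X => (∑ x ∈ X, x) % 2 = i)).card : ℤ)
      = (n.choose c : ℤ) + (-1) ^ i * signedCount n c := by
  have hc : (n.choose c : ℤ) = ∑ X ∈ (Finset.Icc 1 n).powersetCard c, 1 := by
    simp
  rw [hc, signedCount, Finset.mul_sum, ← Finset.sum_add_distrib, Finset.card_filter,
    Nat.cast_sum, Finset.mul_sum]
  refine Finset.sum_congr rfl fun X _ => ?_
  rw [neg_one_pow_eq_pow_mod_two (∑ x ∈ X, x)]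
  rcases Nat.mod_two_eq_zero_or_one (∑ x ∈ X, x) with h | h <;>
    rcases hi with rfl | rfl <;> simp [h]

/-- If `n` is odd and `0 < c < n`, then for each `i ∈ {0,1}`, the number of `c`-element
subsets of `{1,…,n}` with element sum congruent to `i` mod 2 is at most
`(1/2)·(1 + 1/n) · C(n,c)`. -/
theorem parity_odd (n c : ℕ) (hn : Odd n) (h0 : 0 < c) (hcn : c < n)
    (i : ℕ) (hi : i = 0 ∨ i = 1) :
    ((((Finset.Icc 1 n).powersetCard c).filter
        (fun X => (∑ x ∈ X, x) % 2 = i)).card : ℚ)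
      ≤ (1 / 2) * (1 + 1 / (n : ℚ)) * (n.choose c : ℚ) := by
  have h1 := two_mul_card_parity n c i hi
  have h2 := mul_abs_signedCount_le n c hn h0 hcn
  have h3 : (-1) ^ i * signedCount n c ≤ |signedCount n c| := by
    rcases hi with rfl | rfl
    · simpa using le_abs_self _
    · simpa using neg_le_abs _
  generalize (((Finset.Icc 1 n).powersetCard c).filter
        (fun X => (∑ x ∈ X, x) % 2 = i)).card = N at *
  have hnpos : (0 : ℚ) < n := by exact_mod_cast (by omega : 0 < n)
  have h4 : (n : ℤ) * (2 * N) ≤ (n + 1) * (n.choose c : ℤ) := by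
    have := mul_le_mul_of_nonneg_left h3 (Int.natCast_nonneg n)
    rw [h1]; linarith
  have h5 : (n : ℚ) * (2 * N) ≤ (n + 1) * (n.choose c : ℚ) := by exact_mod_cast h4
  have h6 : (1 / 2) * (1 + 1 / (n : ℚ)) * (n.choose c : ℚ)
      = ((n + 1) * (n.choose c : ℚ)) / (2 * n) := by field_simp
  rw [h6, le_div_iff₀ (by positivity)]
  linarith
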